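/- Let G = (U, E) be an undirected graph with U = {u_1, …, u_r}, r ≥ 3, E = {e_1, …, e_s}, s ≥ 1, and let h be an integer with 1 ≤ h ≤ r−1. Consider the partial profile with 2r−1 voters, alternative set A = {p, b, d} ∪ {c_j : e_j ∈ E}, and agenda L: b ▷ d ▷ p ▷ c_s ▷ c_{s−1} ▷ … ▷ c_1 constructed from G and h as described. Then G has a vertex cover of size at most h if and only if there is a completion of the vertex voters' partial orders to linear orders under which p is the amendment winner under L. -/

import Mathlib

open scoped Classical

/-- The number of voters in profile `prof` who strictly prefer `b` to `c`. -/
noncomputable def prefCount {α : Type*} {n : ℕ} (prof : Fin n → α → α → Prop) (b c : α) : ℕ :=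
  (Finset.univ.filter fun i => prof i b c).card

/-- Alternative `b` beats alternative `c`: more than `n/2` voters prefer `b` to `c`. -/
def Beats {α : Type*} {n : ℕ} (prof : Fin n → α → α → Prop) (b c : α) : Prop :=
  2 * prefCount prof b c > n

/-- `a` is an `S`-majority winner: more than `n/2` voters prefer `a`
to every alternative of `S \ {a}`. -/
def IsMajWinner {α : Type*} {n : ℕ} (prof : Fin n → α → α → Prop) (S : Finset α) (a : α) :
    Prop :=
  2 * (Finset.univ.filter fun i => ∀ c ∈ S, c ≠ a → prof i a c).card > n

/-- The successive winner for the agenda given as a list: the first alternative of the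
agenda that is a majority winner with respect to itself and all later alternatives. -/
noncomputable def succWinner {α : Type*} [DecidableEq α] {n : ℕ}
    (prof : Fin n → α → α → Prop) : List α → Option α
  | [] => none
  | a :: rest =>
    if IsMajWinner prof ((a :: rest).toFinset) a then some a
    else succWinner prof rest

/-- The amendment winner for the agenda given as a list: the current round winner is
challenged by the next alternative on the agenda, which takes over if it beats it. -/
noncomputable def amendWinner {α : Type*} {n : ℕ}
    (prof : Fin n → α → α → Prop) : List α → Option α
  | [] => none
  | a :: rest => some (rest.foldl (fun win c => if Beats prof c win then c else win) a)

/-- The alternatives of the reduction: the preferred alternative `P`, the helper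
alternative `B`, the dummy alternative `D`, and one edge alternative `C j` for each
edge `e_j`. -/
inductive Alt (s : ℕ) : Type
  | P : Alt s
  | B : Alt s
  | D : Alt s
  | C : Fin s → Alt s
  deriving DecidableEq

/-- Edge `j` is incident to vertex `i`. -/
def Inc {r s : ℕ} (e : Fin s → Fin r × Fin r) (i : Fin r) (j : Fin s) : Prop :=
  (e j).1 = i ∨ (e j).2 = i

/-- The strict partial order of the vertex voter `v_i`: the non-incident edge
alternatives (in index order) above everything else, together with the two mutually
incomparable chains `⟨I(u_i)⟩ ≻ d` and `b ≻ p`. -/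
def vVoter {r s : ℕ} (e : Fin s → Fin r × Fin r) (i : Fin r) :
    Alt s → Alt s → Prop := fun x y =>
  match x, y with
  | Alt.C j, Alt.C j' =>
      (¬ Inc e i j ∧ Inc e i j') ∨ (Inc e i j ∧ Inc e i j' ∧ j < j') ∨
        (¬ Inc e i j ∧ ¬ Inc e i j' ∧ j < j')
  | Alt.C _, Alt.D => True
  | Alt.C j, Alt.B => ¬ Inc e i j
  | Alt.C j, Alt.P => ¬ Inc e i j
  | Alt.B, Alt.P => True
  | _, _ => False

/-- The linear order `p ≻ c_1 ≻ … ≻ c_s ≻ b ≻ d` of the first group of auxiliary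
voters. -/
def aux1 {s : ℕ} : Alt s → Alt s → Prop := fun x y =>
  match x, y with
  | Alt.P, Alt.C _ => True
  | Alt.P, Alt.B => True
  | Alt.P, Alt.D => True
  | Alt.C j, Alt.C j' => j < j'
  | Alt.C _, Alt.B => True
  | Alt.C _, Alt.D => True
  | Alt.B, Alt.D => True
  | _, _ => False

/-- The linear order `p ≻ d ≻ c_1 ≻ … ≻ c_s ≻ b` of the second group of auxiliary
voters. -/
def aux2 {s : ℕ} : Alt s → Alt s → Prop := fun x y =>
  match x, y with
  | Alt.P, Alt.C _ => True
  | Alt.P, Alt.B => True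
  | Alt.P, Alt.D => True
  | Alt.D, Alt.C _ => True
  | Alt.D, Alt.B => True
  | Alt.C j, Alt.C j' => j < j'
  | Alt.C _, Alt.B => True
  | _, _ => False

/-- The partial profile of the reduction: `r` vertex voters, `r − h − 1` auxiliary voters
of the first kind, and `h` auxiliary voters of the second kind (`2r − 1` voters). -/
def profile11 (r s h : ℕ) (e : Fin s → Fin r × Fin r) :
    Fin (2 * r - 1) → Alt s → Alt s → Prop := fun idx =>
  if hi : (idx : ℕ) < r then vVoter e ⟨idx, hi⟩
  else if (idx : ℕ) < r + (r - h - 1) then aux1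
  else aux2

/-- The agenda `b ▷ d ▷ p ▷ c_s ▷ c_{s−1} ▷ … ▷ c_1` of the reduction. -/
def agenda11 (s : ℕ) : List (Alt s) :=
  [Alt.B, Alt.D, Alt.P] ++ ((List.finRange s).reverse.map Alt.C)

/-! The auxiliary voters are fixed, so each majority comparison becomes a condition on the vertex
voters alone: `p` beats `d` iff some vertex voter prefers it, `c_j` beats `p` iff all of them do,
and `d` beats `b` iff at most `h` of them rank `b` above `d`. A vertex voter who ranks `d` above
`b` is forced to rank every edge alternative above `p`, while one who ranks `b` above `d` can rank
`p` above all edges incident to its vertex. The voters ranking `b` above `d` thus form the cover. -/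

/-- The linear order `R'` is a completion of the partial order `R`. -/
def IsCompletion {α : Type*} (R R' : α → α → Prop) : Prop :=
  IsStrictTotalOrder α R' ∧ ∀ x y, R x y → R' x y

namespace IsCompletion

variable {α : Type*} {R R' : α → α → Prop}

theorem refl (R : α → α → Prop) [IsStrictTotalOrder α R] : IsCompletion R R :=
  ⟨inferInstance, fun _ _ => id⟩

theorem not_of_rel (hR : IsCompletion R R') {x y : α} (hxy : R x y) : ¬ R' y x :=
  have := hR.1
  asymm_of R' (hR.2 x y hxy)

theorem eq_of_isStrictTotalOrder [IsStrictTotalOrder α R] (hR : IsCompletion R R') : R' = R := by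
  have := hR.1
  ext x y
  refine ⟨fun hxy => ?_, hR.2 x y⟩
  rcases trichotomous_of R x y with h | rfl | h
  · exact h
  · exact absurd hxy (irrefl_of R' x)
  · exact absurd hxy (hR.not_of_rel h)

theorem of_injective {β : Type*} [LinearOrder β] {f : α → β} (hf : f.Injective)
    (hR : ∀ x y, R x y → f x < f y) : IsCompletion R (fun x y => f x < f y) :=
  ⟨{ irrefl := fun x => lt_irrefl (f x)
     trans := fun _ _ _ => lt_trans
     trichotomous := fun _ _ hxy hyx => hf (le_antisymm (not_lt.1 hyx) (not_lt.1 hxy)) }, hR⟩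

end IsCompletion

section Amendment

variable {α : Type*} {n : ℕ} (prof : Fin n → α → α → Prop)

theorem foldl_challenge_eq_iff {p : α} {l : List α} (hp : p ∉ l) (w : α) :
    l.foldl (fun win c => if Beats prof c win then c else win) w = p ↔
      w = p ∧ ∀ c ∈ l, ¬ Beats prof c p := by
  induction l generalizing w with
  | nil => simp
  | cons a l ih =>
    rw [List.foldl_cons, ih (List.not_mem_of_not_mem_cons hp), List.forall_mem_cons]
    grind

theorem amendWinner_cons_cons_cons_eq_some_iff {b d p : α} {l : List α} (hbp : b ≠ p)
    (hdp : d ≠ p) (hp : p ∉ l) (hpb : ¬ Beats prof p b) :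
    amendWinner prof (b :: d :: p :: l) = some p ↔
      Beats prof d b ∧ Beats prof p d ∧ ∀ c ∈ l, ¬ Beats prof c p := by
  rw [amendWinner, Option.some_inj, List.foldl_cons, List.foldl_cons,
    foldl_challenge_eq_iff prof hp]
  grind

end Amendment

section BlockProfile

/-- The `2 r - 1` voters of the reduction sorted into `r` vertex voters, `r - h - 1` auxiliary
voters of the first kind and `h` of the second kind, in the order used by `profile11`. -/
def voterEquiv {r h : ℕ} (hh : h < r) : Fin r ⊕ Fin (r - h - 1) ⊕ Fin h ≃ Fin (2 * r - 1) :=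
  ((Equiv.sumCongr (Equiv.refl _) finSumFinEquiv).trans finSumFinEquiv).trans
    (finCongr (by omega))

variable {α : Type*} {r h : ℕ}

/-- The profile in which the vertex voters have the preferences `V` and the auxiliary voters of
the two kinds have the preferences `R₁` and `R₂`. -/
def blockProfile (hh : h < r) (V : Fin r → α → α → Prop) (R₁ R₂ : α → α → Prop) :
    Fin (2 * r - 1) → α → α → Prop :=
  Sum.elim V (Sum.elim (fun _ => R₁) (fun _ => R₂)) ∘ (voterEquiv hh).symm

variable (hh : h < r) (V : Fin r → α → α → Prop) (R₁ R₂ : α → α → Prop)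

theorem forall_isCompletion_blockProfile_iff [IsStrictTotalOrder α R₁] [IsStrictTotalOrder α R₂]
    (comp : Fin (2 * r - 1) → α → α → Prop) :
    (∀ idx, IsCompletion (blockProfile hh V R₁ R₂ idx) (comp idx)) ↔
      ∃ W : Fin r → α → α → Prop,
        (∀ i, IsCompletion (V i) (W i)) ∧ comp = blockProfile hh W R₁ R₂ := by
  constructor
  · intro hcomp
    have hcomp' (v) : IsCompletion (Sum.elim V (Sum.elim (fun _ => R₁) (fun _ => R₂)) v)
        (comp (voterEquiv hh v)) := by
      simpa [blockProfile] using hcomp (voterEquiv hh v)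
    refine ⟨fun i => comp (voterEquiv hh (.inl i)), fun i => hcomp' (.inl i), ?_⟩
    rw [blockProfile, Equiv.eq_comp_symm]
    funext v
    rcases v with i | k | k
    · rfl
    · exact IsCompletion.eq_of_isStrictTotalOrder (R := R₁) (hcomp' (.inr (.inl k)))
    · exact IsCompletion.eq_of_isStrictTotalOrder (R := R₂) (hcomp' (.inr (.inr k)))
  · rintro ⟨W, hW, rfl⟩ idx
    obtain ⟨i | k | k, rfl⟩ := (voterEquiv hh).surjective idx
    · simpa [blockProfile] using hW i
    · simpa [blockProfile] using IsCompletion.refl R₁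
    · simpa [blockProfile] using IsCompletion.refl R₂

theorem prefCount_blockProfile (x y : α) :
    prefCount (blockProfile hh V R₁ R₂) x y =
      (Finset.univ.filter fun i => V i x y).card +
        ((if R₁ x y then r - h - 1 else 0) + if R₂ x y then h else 0) := by
  rw [prefCount, Finset.card_filter, ← (voterEquiv hh).sum_comp, Fintype.sum_sum_type,
    Fintype.sum_sum_type]
  simp [blockProfile]

variable {R₁ R₂} {x y : α}

theorem beats_blockProfile_iff_exists (h₁ : R₁ x y) (h₂ : R₂ x y) :
    Beats (blockProfile hh V R₁ R₂) x y ↔ ∃ i, V i x y := by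
  have hpos : 0 < (Finset.univ.filter fun i => V i x y).card ↔ ∃ i, V i x y := by
    simp [Finset.card_pos, Finset.filter_nonempty_iff]
  rw [← hpos, Beats, prefCount_blockProfile, if_pos h₁, if_pos h₂]
  omega

theorem beats_blockProfile_iff_forall (h₁ : ¬ R₁ x y) (h₂ : ¬ R₂ x y) :
    Beats (blockProfile hh V R₁ R₂) x y ↔ ∀ i, V i x y := by
  have hle : (Finset.univ.filter fun i => V i x y).card ≤ r := card_finset_fin_le _
  have heq : (Finset.univ.filter fun i => V i x y).card = r ↔ ∀ i, V i x y := by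
    simpa using Finset.card_filter_eq_iff (s := Finset.univ) (p := fun i => V i x y)
  rw [← heq, Beats, prefCount_blockProfile, if_neg h₁, if_neg h₂]
  omega

theorem beats_blockProfile_iff_card_le (h₁ : ¬ R₁ x y) (h₂ : R₂ x y) :
    Beats (blockProfile hh V R₁ R₂) x y ↔ (Finset.univ.filter fun i => ¬ V i x y).card ≤ h := by
  have hsum : (Finset.univ.filter fun i => V i x y).card +
      (Finset.univ.filter fun i => ¬ V i x y).card = r := by
    rw [Finset.card_filter_add_card_filter_not, Finset.card_univ, Fintype.card_fin]
  rw [Beats, prefCount_blockProfile, if_neg h₁, if_pos h₂]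
  omega

end BlockProfile

section Reduction

instance isStrictTotalOrder_aux1 (s : ℕ) : IsStrictTotalOrder (Alt s) aux1 where
  irrefl := by rintro (_ | _ | _ | _) <;> grind [aux1]
  trans := by rintro (_ | _ | _ | _) (_ | _ | _ | _) (_ | _ | _ | _) <;> grind [aux1]
  trichotomous := by rintro (_ | _ | _ | _) (_ | _ | _ | _) <;> grind [aux1]

instance isStrictTotalOrder_aux2 (s : ℕ) : IsStrictTotalOrder (Alt s) aux2 where
  irrefl := by rintro (_ | _ | _ | _) <;> grind [aux2]
  trans := by rintro (_ | _ | _ | _) (_ | _ | _ | _) (_ | _ | _ | _) <;> grind [aux2]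
  trichotomous := by rintro (_ | _ | _ | _) (_ | _ | _ | _) <;> grind [aux2]

variable {r s h : ℕ} (e : Fin s → Fin r × Fin r)

theorem profile11_eq_blockProfile (hh : h < r) :
    profile11 r s h e = blockProfile hh (vVoter e) aux1 aux2 := by
  rw [blockProfile, Equiv.eq_comp_symm]
  funext v
  rcases v with i | k | k <;> simp [profile11, voterEquiv]

theorem amendWinner_agenda11_eq_P_iff (hh : h < r) {W : Fin r → Alt s → Alt s → Prop}
    (hW : ∀ i, ¬ W i Alt.P Alt.B) :
    amendWinner (blockProfile hh W aux1 aux2) (agenda11 s) = some Alt.P ↔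
      (Finset.univ.filter fun i => ¬ W i Alt.D Alt.B).card ≤ h ∧ (∃ i, W i Alt.P Alt.D) ∧
        ∀ j, ∃ i, ¬ W i (Alt.C j) Alt.P := by
  have hPB : ¬ Beats (blockProfile hh W aux1 aux2) Alt.P Alt.B := by
    rw [beats_blockProfile_iff_exists hh W trivial trivial]
    exact not_exists.2 hW
  have hCP (j) : Beats (blockProfile hh W aux1 aux2) (Alt.C j) Alt.P ↔ ∀ i, W i (Alt.C j) Alt.P :=
    beats_blockProfile_iff_forall hh W id id
  simp only [agenda11, List.cons_append, List.nil_append]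
  rw [amendWinner_cons_cons_cons_eq_some_iff _ (by simp) (by simp) (by simp) hPB,
    beats_blockProfile_iff_card_le hh W id trivial,
    beats_blockProfile_iff_exists hh W trivial trivial]
  simp [hCP]

theorem exists_completion_amendWinner_iff (hh : h < r) :
    (∃ comp : Fin (2 * r - 1) → Alt s → Alt s → Prop,
      (∀ idx, IsCompletion (profile11 r s h e idx) (comp idx)) ∧
        amendWinner comp (agenda11 s) = some Alt.P) ↔
      ∃ W : Fin r → Alt s → Alt s → Prop, (∀ i, IsCompletion (vVoter e i) (W i)) ∧
        (Finset.univ.filter fun i => ¬ W i Alt.D Alt.B).card ≤ h ∧ (∃ i, W i Alt.P Alt.D) ∧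
          ∀ j, ∃ i, ¬ W i (Alt.C j) Alt.P := by
  have hPB {W : Fin r → Alt s → Alt s → Prop} (hW : ∀ i, IsCompletion (vVoter e i) (W i)) (i) :
      ¬ W i Alt.P Alt.B :=
    (hW i).not_of_rel trivial
  simp only [profile11_eq_blockProfile e hh, forall_isCompletion_blockProfile_iff]
  constructor
  · rintro ⟨_, ⟨W, hW, rfl⟩, hwin⟩
    exact ⟨W, hW, (amendWinner_agenda11_eq_P_iff hh (hPB hW)).1 hwin⟩
  · rintro ⟨W, hW, hwin⟩
    exact ⟨_, ⟨W, hW, rfl⟩, (amendWinner_agenda11_eq_P_iff hh (hPB hW)).2 hwin⟩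

variable {e} in
theorem IsCompletion.inc_and_not_rel_D_B {i : Fin r} {R : Alt s → Alt s → Prop}
    (hR : IsCompletion (vVoter e i) R) {j : Fin s} (hj : ¬ R (Alt.C j) Alt.P) :
    Inc e i j ∧ ¬ R Alt.D Alt.B := by
  have := hR.1
  refine ⟨not_not.1 fun hinc => hj (hR.2 _ _ hinc), fun hDB => hj ?_⟩
  have hCD : R (Alt.C j) Alt.D := hR.2 _ _ trivial
  have hBP : R Alt.B Alt.P := hR.2 _ _ trivial
  exact trans_of R (trans_of R hCD hDB) hBP

/-- The ranks realizing `⟨non-incident edges⟩ ≻ b ≻ p ≻ ⟨incident edges⟩ ≻ d`, the preferences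
of a vertex voter in the cover; lower ranks are preferred, and the second component orders the
edges within a block. -/
noncomputable def coverRank (i : Fin r) : Alt s → ℕ ×ₗ ℕ
  | Alt.C j => toLex (if Inc e i j then 3 else 0, (j : ℕ))
  | Alt.B => toLex (1, 0)
  | Alt.P => toLex (2, 0)
  | Alt.D => toLex (4, 0)

/-- The ranks realizing `⟨non-incident edges⟩ ≻ ⟨incident edges⟩ ≻ d ≻ b ≻ p`, the preferences
of a vertex voter outside the cover, encoded as in `coverRank`. -/
noncomputable def nonCoverRank (i : Fin r) : Alt s → ℕ ×ₗ ℕ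
  | Alt.C j => toLex (if Inc e i j then 1 else 0, (j : ℕ))
  | Alt.D => toLex (2, 0)
  | Alt.B => toLex (3, 0)
  | Alt.P => toLex (4, 0)

theorem coverRank_injective (i : Fin r) : (coverRank e i).Injective := by
  rintro (_ | _ | _ | _) (_ | _ | _ | _) <;> grind [coverRank, toLex_inj]

theorem nonCoverRank_injective (i : Fin r) : (nonCoverRank e i).Injective := by
  rintro (_ | _ | _ | _) (_ | _ | _ | _) <;> grind [nonCoverRank, toLex_inj]

theorem isCompletion_coverRank (i : Fin r) :
    IsCompletion (vVoter e i) (fun x y => coverRank e i x < coverRank e i y) := by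
  refine .of_injective (coverRank_injective e i) ?_
  rintro (_ | _ | _ | _) (_ | _ | _ | _) <;>
    grind [coverRank, vVoter, Prod.Lex.toLex_lt_toLex]

theorem isCompletion_nonCoverRank (i : Fin r) :
    IsCompletion (vVoter e i) (fun x y => nonCoverRank e i x < nonCoverRank e i y) := by
  refine .of_injective (nonCoverRank_injective e i) ?_
  rintro (_ | _ | _ | _) (_ | _ | _ | _) <;>
    grind [nonCoverRank, vVoter, Prod.Lex.toLex_lt_toLex]

theorem exists_isCompletion_P_D (i : Fin r) :
    ∃ R, IsCompletion (vVoter e i) R ∧ R Alt.P Alt.D ∧ ∀ j, Inc e i j → ¬ R (Alt.C j) Alt.P := by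
  refine ⟨_, isCompletion_coverRank e i, ?_, fun j hj => ?_⟩
  · simp [coverRank, Prod.Lex.toLex_lt_toLex]
  · simp [coverRank, Prod.Lex.toLex_lt_toLex, hj]

theorem exists_isCompletion_D_B (i : Fin r) :
    ∃ R, IsCompletion (vVoter e i) R ∧ R Alt.D Alt.B :=
  ⟨_, isCompletion_nonCoverRank e i, by simp [nonCoverRank, Prod.Lex.toLex_lt_toLex]⟩

theorem exists_isCompletion_of_finset (S : Finset (Fin r)) :
    ∃ W : Fin r → Alt s → Alt s → Prop, (∀ i, IsCompletion (vVoter e i) (W i)) ∧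
      (∀ i ∉ S, W i Alt.D Alt.B) ∧
      ∀ i ∈ S, W i Alt.P Alt.D ∧ ∀ j, Inc e i j → ¬ W i (Alt.C j) Alt.P := by
  choose W hW hWD using exists_isCompletion_D_B e
  choose W' hW' hWP using exists_isCompletion_P_D e
  refine ⟨fun i => if i ∈ S then W' i else W i, fun i => ?_, fun i hi => ?_, fun i hi => ?_⟩
  · by_cases hi : i ∈ S
    · simpa only [if_pos hi] using hW' i
    · simpa only [if_neg hi] using hW i
  · simpa only [if_neg hi] using hWD i
  · simpa only [if_pos hi] using hWP i

theorem forall_mem_or_mem_iff_exists_inc {S : Finset (Fin r)} :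
    (∀ j, (e j).1 ∈ S ∨ (e j).2 ∈ S) ↔ ∀ j, ∃ i ∈ S, Inc e i j := by
  simp only [Inc, and_or_left, exists_or, exists_eq_right']

theorem stmt11_general (hs : 0 < s) (hh : h < r) :
    (∃ S : Finset (Fin r), S.card ≤ h ∧ ∀ j, (e j).1 ∈ S ∨ (e j).2 ∈ S) ↔
    (∃ comp : Fin (2 * r - 1) → Alt s → Alt s → Prop,
      (∀ idx, IsStrictTotalOrder (Alt s) (comp idx) ∧
        ∀ x y, profile11 r s h e idx x y → comp idx x y) ∧
      amendWinner comp (agenda11 s) = some Alt.P) := by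
  refine Iff.trans ?_ (exists_completion_amendWinner_iff e hh).symm
  simp only [forall_mem_or_mem_iff_exists_inc]
  constructor
  · rintro ⟨S, hSh, hcover⟩
    obtain ⟨W, hW, hout, hin⟩ := exists_isCompletion_of_finset e S
    have hDB : (Finset.univ.filter fun i => ¬ W i Alt.D Alt.B) ⊆ S := by
      intro i hi
      exact not_not.1 fun hiS => (Finset.mem_filter.1 hi).2 (hout i hiS)
    obtain ⟨i₀, hi₀, -⟩ := hcover ⟨0, hs⟩
    refine ⟨W, hW, (Finset.card_le_card hDB).trans hSh, ⟨i₀, (hin i₀ hi₀).1⟩, fun j => ?_⟩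
    obtain ⟨i, hi, hij⟩ := hcover j
    exact ⟨i, (hin i hi).2 j hij⟩
  · rintro ⟨W, hW, hcard, -, hCP⟩
    refine ⟨Finset.univ.filter fun i => ¬ W i Alt.D Alt.B, hcard, fun j => ?_⟩
    obtain ⟨i, hi⟩ := hCP j
    obtain ⟨hij, hDB⟩ := (hW i).inc_and_not_rel_D_B hi
    exact ⟨i, by simpa using hDB, hij⟩

end Reduction

/-- `G` has a vertex cover of size at most `h` iff some completion of the constructed
partial profile makes `p` the amendment winner under the agenda
`b ▷ d ▷ p ▷ c_s ▷ … ▷ c_1`. -/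
theorem stmt11 (r s h : ℕ) (hr : 3 ≤ r) (hs : 1 ≤ s) (hh1 : 1 ≤ h) (hhr : h ≤ r - 1)
    (e : Fin s → Fin r × Fin r) (he : ∀ j, (e j).1 ≠ (e j).2) :
    (∃ S : Finset (Fin r), S.card ≤ h ∧ ∀ j, (e j).1 ∈ S ∨ (e j).2 ∈ S) ↔
    (∃ comp : Fin (2 * r - 1) → Alt s → Alt s → Prop,
      (∀ idx, IsStrictTotalOrder (Alt s) (comp idx) ∧
        ∀ x y, profile11 r s h e idx x y → comp idx x y) ∧
      amendWinner comp (agenda11 s) = some Alt.P) :=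
  stmt11_general e hs (by omega)
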